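/- arXiv:2503.19181 — 4 statements merged into one kernel-verified Lean document; each statement's English description precedes it below -/
import Mathlib

section
/- Let F ⊆ (Fin k → ZMod 2) be a binary matroid, let F' ⊆ F, and let r : F → F be a matroid homomorphism whose image is contained in F', which fixes every point of F', and which is equal to or adjacent to the identity map in the recolouring graph mCol(F, F) (a dismantling retraction of F onto F'). Then for every binary matroid E ⊆ (Fin m → ZMod 2) and every pair of matroid homomorphisms τ, τ' : E → F, τ and τ' are joined by a walk in mCol(E, F) if and only if r ∘ τ and r ∘ τ' are joined by a walk in mCol(E, F'). -/
/-- A circuit of a binary matroid with point set `E`: a minimal nonempty subset summing to 0. -/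
def IsCircuit {P : Type*} [AddCommGroup P] (E Z : Finset P) : Prop :=
  Z ⊆ E ∧ Z.Nonempty ∧ ∑ e ∈ Z, e = 0 ∧
    ∀ Z' ⊆ Z, Z'.Nonempty → ∑ e ∈ Z', e = 0 → Z' = Z

/-- A cocircuit: a minimal nonempty subset meeting every circuit evenly. -/
def IsCocircuit {P : Type*} [AddCommGroup P] [DecidableEq P] (E C : Finset P) : Prop :=
  C ⊆ E ∧ C.Nonempty ∧ (∀ Z, IsCircuit E Z → Even (C ∩ Z).card) ∧
    ∀ C' ⊆ C, C'.Nonempty → (∀ Z, IsCircuit E Z → Even (C' ∩ Z).card) → C' = C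

/-- A matroid homomorphism from the matroid on `E` to the matroid on `F`. -/
def IsMHom {P Q : Type*} [AddCommGroup P] [AddCommGroup Q]
    (E : Finset P) (F : Finset Q) (τ : P → Q) : Prop :=
  (∀ e ∈ E, τ e ∈ F) ∧ ∀ Z, IsCircuit E Z → ∑ e ∈ Z, τ e = 0

/-- Adjacency in the recolouring graph: the maps differ exactly on a cocircuit. -/
def MAdj {P Q : Type*} [AddCommGroup P] [AddCommGroup Q] [DecidableEq P]
    (E : Finset P) (τ τ' : P → Q) : Prop :=
  ∃ C, IsCocircuit E C ∧ ∀ e ∈ E, (τ e ≠ τ' e ↔ e ∈ C)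

/-- One step of a walk in `mCol(E,F)`: both maps are homomorphisms and they are
equal (as maps on `E`) or adjacent. -/
def MStep {P Q : Type*} [AddCommGroup P] [AddCommGroup Q] [DecidableEq P]
    (E : Finset P) (F : Finset Q) (τ τ' : P → Q) : Prop :=
  IsMHom E F τ ∧ IsMHom E F τ' ∧ ((∀ e ∈ E, τ e = τ' e) ∨ MAdj E τ τ')

/-- Joined by a walk in the recolouring graph `mCol(E,F)`. -/
def MWalk {P Q : Type*} [AddCommGroup P] [AddCommGroup Q] [DecidableEq P]
    (E : Finset P) (F : Finset Q) : (P → Q) → (P → Q) → Prop :=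
  Relation.ReflTransGen (MStep E F)

/-- The indicator vector of a vertex. -/
def ind {V : Type*} [DecidableEq V] (u : V) : V → ZMod 2 := Pi.single u 1

/-- The decision graph of a set `F` of nonzero vectors. -/
def decisionGraph {m : ℕ} (F : Finset (Fin m → ZMod 2)) : SimpleGraph (Fin m → ZMod 2) where
  Adj v w := v + w ∈ F ∧ v ≠ w
  symm := by
    constructor
    intro v w h
    exact ⟨by rw [add_comm]; exact h.1, h.2.symm⟩
  loopless := by
    constructor
    intro v h
    exact h.2 rfl

/-- The weight of a vector: its number of nonzero coordinates. -/
def wt {n : ℕ} (e : Fin n → ZMod 2) : ℕ := (Finset.univ.filter fun i => e i ≠ 0).card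


def Hm {P Q : Type*} [AddCommGroup P] [AddCommGroup Q] (E : Finset P) (g : P → Q) : Prop :=
  ∀ Z, IsCircuit E Z → ∑ e ∈ Z, g e = 0

theorem exists_minimal_sub {P : Type*} [DecidableEq P] (p : Finset P → Prop) (Z : Finset P)
    (hn : Z.Nonempty) (hp : p Z) :
    ∃ C ⊆ Z, C.Nonempty ∧ p C ∧ ∀ C' ⊆ C, C'.Nonempty → p C' → C' = C := by
  induction Z using Finset.strongInduction with
  | H Z ih =>
    by_cases h : ∃ Y ⊂ Z, Y.Nonempty ∧ p Y
    · obtain ⟨Y, hY, hYn, hYp⟩ := h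
      obtain ⟨C, hC, h⟩ := ih Y hY hYn hYp
      exact ⟨C, hC.trans hY.1, h⟩
    · refine ⟨Z, subset_rfl, hn, hp, fun C' hC' h1 h2 => ?_⟩
      by_contra hne
      exact h ⟨C', hC'.ssubset_of_ne hne, h1, h2⟩

theorem hm_cycle {P Q : Type*} [AddCommGroup P] [AddCommGroup Q] [DecidableEq P]
    {E : Finset P} {g : P → Q} (hg : Hm E g) (Z : Finset P) (hZ : Z ⊆ E)
    (h0 : ∑ e ∈ Z, e = 0) : ∑ e ∈ Z, g e = 0 := by
  induction Z using Finset.strongInduction with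
  | H Z ih =>
    rcases Z.eq_empty_or_nonempty with rfl | hn
    · simp
    · obtain ⟨C, hC, hCn, hC0, hmin⟩ :=
        exists_minimal_sub (fun Z => ∑ e ∈ Z, e = 0) Z hn h0
      have h1 := Finset.sum_sdiff (f := fun e => e) hC
      have h2 := Finset.sum_sdiff (f := g) hC
      have h3 : ∑ e ∈ C, g e = 0 := hg C ⟨hC.trans hZ, hCn, hC0, hmin⟩
      rw [← h2, h3, add_zero]
      apply ih _ (Finset.sdiff_ssubset hC hCn) (Finset.sdiff_subset.trans hZ)
      rw [hC0, h0, add_zero] at h1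
      exact h1

theorem two_smul_zero {Q : Type*} [AddCommGroup Q] [Module (ZMod 2) Q] (q : Q) : q + q = 0 :=
  ZModModule.add_self q

theorem nsmul_par {Q : Type*} [AddCommGroup Q] [Module (ZMod 2) Q] (n : ℕ) (q : Q) :
    n • q = if Odd n then q else 0 := by
  split_ifs with h
  · obtain ⟨a, rfl⟩ := h
    rw [add_smul, mul_comm, mul_smul, two_smul, two_smul_zero, smul_zero, one_smul, zero_add]
  · obtain ⟨a, rfl⟩ := Nat.not_odd_iff_even.1 h
    rw [add_smul, two_smul_zero]

theorem sum_comp_par {P R Q : Type*} [DecidableEq R] [AddCommGroup Q] [Module (ZMod 2) Q]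
    (Z : Finset P) (F : Finset R) (τ : P → R) (hτ : ∀ e ∈ Z, τ e ∈ F) (g : R → Q) :
    ∑ e ∈ Z, g (τ e) = ∑ f ∈ F with Odd (Z.filter fun e => τ e = f).card, g f := by
  rw [← Finset.sum_fiberwise_of_maps_to hτ, Finset.sum_filter]
  refine Finset.sum_congr rfl fun f _ => ?_
  rw [← nsmul_par, ← Finset.sum_const]
  refine Finset.sum_congr rfl fun e he => ?_
  rw [(Finset.mem_filter.1 he).2]

theorem hm_comp {P R Q : Type*} [AddCommGroup P] [AddCommGroup R] [AddCommGroup Q]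
    [DecidableEq R] [Module (ZMod 2) R] [Module (ZMod 2) Q]
    {E : Finset P} {F : Finset R} {τ : P → R} {g : R → Q} (hτ : IsMHom E F τ) (hg : Hm F g) :
    Hm E (fun e => g (τ e)) := by
  intro Z hZ
  have hm : ∀ e ∈ Z, τ e ∈ F := fun e he => hτ.1 e (hZ.1 he)
  rw [sum_comp_par Z F τ hm g]
  apply hm_cycle hg _ (Finset.filter_subset _ _)
  have := sum_comp_par Z F τ hm (fun x => x)
  rw [← this]
  exact hτ.2 Z hZ

theorem even_iff_ind {P : Type*} [DecidableEq P] (C Z : Finset P) :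
    Even (C ∩ Z).card ↔ ∑ e ∈ Z, (if e ∈ C then (1 : ZMod 2) else 0) = 0 := by
  rw [← Finset.sum_filter, Finset.sum_const, nsmul_one, ZMod.natCast_eq_zero_iff_even,
    Finset.filter_mem_eq_inter, Finset.inter_comm]

theorem zmod2_ne {a : ZMod 2} (h : a ≠ 0) : a = 1 := by
  revert h; revert a; decide

theorem supp_const {P : Type*} [AddCommGroup P] [DecidableEq P] {k : ℕ} {E C : Finset P}
    {d : P → Fin k → ZMod 2} (hd : Hm E d) (hC : IsCocircuit E C)
    (hs : ∀ e ∈ E, e ∉ C → d e = 0) :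
    ∃ c, ∀ e ∈ C, d e = c := by
  obtain ⟨hCE, ⟨e0, he0⟩, hev, hmin⟩ := hC
  refine ⟨d e0, fun e he => ?_⟩
  funext i
  have key : (C.filter fun e => d e i ≠ 0).Nonempty → (C.filter fun e => d e i ≠ 0) = C := by
    intro hn
    apply hmin _ (Finset.filter_subset _ _) hn
    intro Z hZ
    rw [even_iff_ind]
    have h := congrFun (hd Z hZ) i
    rw [Finset.sum_apply] at h
    rw [Pi.zero_apply] at h
    refine Eq.trans ?_ h
    refine Finset.sum_congr rfl fun x hx => ?_
    by_cases hxC : x ∈ C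
    · by_cases h0 : d x i = 0
      · simp [h0]
      · simp [hxC, zmod2_ne h0]
    · simp [hxC, hs x (hZ.1 hx) hxC]
  by_cases hn : (C.filter fun e => d e i ≠ 0).Nonempty
  · have h := key hn
    have h1 : ∀ x ∈ C, d x i = 1 := fun x hx => by
      rw [← h] at hx
      exact zmod2_ne (Finset.mem_filter.1 hx).2
    rw [h1 e he, h1 e0 he0]
  · have h1 : ∀ x ∈ C, d x i = 0 := fun x hx => by
      by_contra h
      exact hn ⟨x, Finset.mem_filter.2 ⟨hx, h⟩⟩
    rw [h1 e he, h1 e0 he0]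

theorem hm_add {P Q : Type*} [AddCommGroup P] [AddCommGroup Q] {E : Finset P} {f g : P → Q}
    (hf : Hm E f) (hg : Hm E g) : Hm E (fun e => f e + g e) := by
  intro Z hZ
  rw [Finset.sum_add_distrib, hf Z hZ, hg Z hZ, add_zero]

theorem add_eq_zero_char2 {Q : Type*} [AddCommGroup Q] [Module (ZMod 2) Q] {a b : Q} :
    a + b = 0 ↔ a = b := by
  constructor
  · intro h
    have := two_smul_zero b
    exact add_right_cancel (h.trans this.symm)
  · rintro rfl
    exact two_smul_zero a

theorem step_comp {k : ℕ} {P : Type*} [AddCommGroup P] [DecidableEq P]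
    {F F' : Finset (Fin k → ZMod 2)}
    {r : (Fin k → ZMod 2) → (Fin k → ZMod 2)}
    (hr : IsMHom F F' r) {E : Finset P} {τ τ' : P → (Fin k → ZMod 2)}
    (h : MStep E F τ τ') : MStep E F' (r ∘ τ) (r ∘ τ') := by
  obtain ⟨h1, h2, h3⟩ := h
  have c1 : Hm E (fun e => r (τ e)) := hm_comp h1 hr.2
  have c2 : Hm E (fun e => r (τ' e)) := hm_comp h2 hr.2
  refine ⟨⟨fun e he => hr.1 _ (h1.1 e he), c1⟩, ⟨fun e he => hr.1 _ (h2.1 e he), c2⟩, ?_⟩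
  rcases h3 with h3 | ⟨C, hC, h3⟩
  · left
    intro e he
    simp [h3 e he]
  · have hs : ∀ e ∈ E, e ∉ C → r (τ e) + r (τ' e) = 0 := by
      intro e he hne
      have : τ e = τ' e := by
        by_contra hh
        exact hne ((h3 e he).1 hh)
      rw [this, two_smul_zero]
    obtain ⟨c, hc⟩ := supp_const (hm_add c1 c2) hC hs
    by_cases hc0 : c = 0
    · left
      intro e he
      by_cases heC : e ∈ C
      · exact add_eq_zero_char2.1 ((hc e heC).trans hc0)
      · exact add_eq_zero_char2.1 (hs e he heC)
    · right
      refine ⟨C, hC, fun e he => ⟨fun hne => ?_, fun heC heq => ?_⟩⟩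
      · by_contra heC
        exact hne (add_eq_zero_char2.1 (hs e he heC))
      · exact hc0 ((hc e heC).symm.trans (add_eq_zero_char2.2 heq))

theorem walk_flip {k : ℕ} {P : Type*} [AddCommGroup P] [DecidableEq P]
    {F : Finset (Fin k → ZMod 2)} {E : Finset P} {c : Fin k → ZMod 2} (hc : c ≠ 0)
    (D : Finset P) : ∀ (τ : P → (Fin k → ZMod 2)), IsMHom E F τ → D ⊆ E →
    (∀ Z, IsCircuit E Z → Even (D ∩ Z).card) → (∀ e ∈ D, τ e + c ∈ F) →
    IsMHom E F (fun e => if e ∈ D then τ e + c else τ e) ∧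
    MWalk E F τ (fun e => if e ∈ D then τ e + c else τ e) := by
  induction D using Finset.strongInduction with
  | H D ih =>
    intro τ hτ hDE hev hF
    rcases D.eq_empty_or_nonempty with rfl | hn
    · simpa using ⟨hτ, Relation.ReflTransGen.refl⟩
    obtain ⟨C, hCD, hCn, hCev, hmin⟩ :=
      exists_minimal_sub (fun D => ∀ Z, IsCircuit E Z → Even (D ∩ Z).card) D hn hev
    have hCc : IsCocircuit E C := ⟨hCD.trans hDE, hCn, hCev, hmin⟩
    have h1 : IsMHom E F (fun e => if e ∈ C then τ e + c else τ e) := by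
      constructor
      · intro e he
        dsimp only
        split_ifs with h
        · exact hF e (hCD h)
        · exact hτ.1 e he
      · intro Z hZ
        have : ∀ e, (if e ∈ C then τ e + c else τ e) = τ e + (if e ∈ C then c else 0) := by
          intro e; split_ifs <;> simp
        simp only [this]
        rw [Finset.sum_add_distrib, hτ.2 Z hZ, zero_add, ← Finset.sum_filter, Finset.sum_const,
          Finset.filter_mem_eq_inter, Finset.inter_comm, nsmul_par,
          if_neg (Nat.not_odd_iff_even.2 (hCev Z hZ))]
    have hstep : MStep E F τ (fun e => if e ∈ C then τ e + c else τ e) := by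
      refine ⟨hτ, h1, Or.inr ⟨C, hCc, fun e _ => ?_⟩⟩
      by_cases h : e ∈ C <;> simp [h, hc]
    have h2 := ih (D \ C) (Finset.sdiff_ssubset hCD hCn) _ h1
      (Finset.sdiff_subset.trans hDE) (by
        intro Z hZ
        have e1 : (D \ C) ∩ Z = (D ∩ Z) \ (C ∩ Z) := by
          ext x; simp only [Finset.mem_inter, Finset.mem_sdiff]; tauto
        have hsub : C ∩ Z ⊆ D ∩ Z := Finset.inter_subset_inter_right hCD
        have e2 := Finset.card_sdiff_add_card_eq_card hsub
        rw [e1]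
        have := hev Z hZ
        rw [← e2, Nat.even_add] at this
        exact this.2 (hCev Z hZ)) (by
        intro e he
        rw [Finset.mem_sdiff] at he
        simp only [he.2, if_false]
        exact hF e he.1)
    have e3 : (fun e => if e ∈ D \ C then (if e ∈ C then τ e + c else τ e) + c
        else (if e ∈ C then τ e + c else τ e)) = (fun e => if e ∈ D then τ e + c else τ e) := by
      funext e
      by_cases h : e ∈ C
      · simp [h, hCD h]
      · simp [h]
    rw [e3] at h2
    exact ⟨h2.1, Relation.ReflTransGen.head hstep h2.2⟩

theorem step_symm {P Q : Type*} [AddCommGroup P] [AddCommGroup Q] [DecidableEq P]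
    {E : Finset P} {F : Finset Q} {τ τ' : P → Q} (h : MStep E F τ τ') : MStep E F τ' τ := by
  obtain ⟨h1, h2, h3⟩ := h
  refine ⟨h2, h1, ?_⟩
  rcases h3 with h3 | ⟨C, hC, h3⟩
  · exact Or.inl fun e he => (h3 e he).symm
  · exact Or.inr ⟨C, hC, fun e he => ne_comm.trans (h3 e he)⟩

theorem walk_retract {k : ℕ} {P : Type*} [AddCommGroup P] [DecidableEq P]
    {F : Finset (Fin k → ZMod 2)}
    {r : (Fin k → ZMod 2) → (Fin k → ZMod 2)} (hr : IsMHom F F r)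
    (hdis : (∀ e ∈ F, r e = e) ∨ MAdj F (id : (Fin k → ZMod 2) → (Fin k → ZMod 2)) r)
    {E : Finset P} {τ : P → (Fin k → ZMod 2)} (hτ : IsMHom E F τ) :
    MWalk E F τ (r ∘ τ) := by
  have hrτ : IsMHom E F (r ∘ τ) := ⟨fun e he => hr.1 _ (hτ.1 e he), hm_comp (g := r) hτ hr.2⟩
  rcases hdis with h | ⟨C, hC, h⟩
  · exact Relation.ReflTransGen.single
      ⟨hτ, hrτ, Or.inl fun e he => (h _ (hτ.1 e he)).symm⟩
  · have hid : Hm F (fun e : Fin k → ZMod 2 => e) := fun Z hZ => hZ.2.2.1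
    have hs : ∀ e ∈ F, e ∉ C → e + r e = 0 := by
      intro e he hne
      rw [add_eq_zero_char2]
      by_contra hh
      exact hne ((h e he).1 hh)
    obtain ⟨c, hc⟩ := supp_const (hm_add hid hr.2) hC hs
    have hval : ∀ e ∈ C, e + c = r e := by
      intro e he
      rw [← hc e he, ← add_assoc, two_smul_zero, zero_add]
    have hc0 : c ≠ 0 := by
      rintro rfl
      obtain ⟨e, he⟩ := hC.2.1
      exact (h e (hC.1 he)).2 he (add_eq_zero_char2.1 (hc e he))
    have hCind : Hm F (fun e => if e ∈ C then (1 : ZMod 2) else 0) :=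
      fun Z hZ => (even_iff_ind C Z).1 (hC.2.2.1 Z hZ)
    have hw := walk_flip (F := F) (E := E) hc0 (E.filter fun e => τ e ∈ C) τ hτ
      (Finset.filter_subset _ _) (by
        intro Z hZ
        rw [even_iff_ind]
        refine Eq.trans ?_ (hm_comp hτ hCind Z hZ)
        refine Finset.sum_congr rfl fun e he => ?_
        simp [hZ.1 he]) (by
        intro e he
        rw [Finset.mem_filter] at he
        rw [hval _ he.2]
        exact hr.1 _ (hτ.1 e he.1))
    refine Relation.ReflTransGen.tail hw.2 ⟨hw.1, hrτ, Or.inl fun e he => ?_⟩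
    by_cases hm : τ e ∈ C
    · simp [he, hm, hval]
    · simp only [Finset.mem_filter, hm, and_false, if_false]
      exact add_eq_zero_char2.1 (hs _ (hτ.1 e he) hm)

theorem stmt7 (k : ℕ) (F F' : Finset (Fin k → ZMod 2)) (hF' : F' ⊆ F)
    (r : (Fin k → ZMod 2) → (Fin k → ZMod 2))
    (hr : IsMHom F F r) (him : ∀ e ∈ F, r e ∈ F') (hfix : ∀ e ∈ F', r e = e)
    (hdis : (∀ e ∈ F, r e = e) ∨ MAdj F (id : (Fin k → ZMod 2) → (Fin k → ZMod 2)) r)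
    (m : ℕ) (E : Finset (Fin m → ZMod 2))
    (τ τ' : (Fin m → ZMod 2) → (Fin k → ZMod 2))
    (hτ : IsMHom E F τ) (hτ' : IsMHom E F τ') :
    MWalk E F τ τ' ↔ MWalk E F' (r ∘ τ) (r ∘ τ') := by
  have hr' : IsMHom F F' r := ⟨him, hr.2⟩
  constructor
  · intro h
    exact Relation.ReflTransGen.lift (fun σ => r ∘ σ) (fun _ _ hs => step_comp hr' hs) _ _ h
  · intro h
    have h2 : MWalk E F (r ∘ τ) (r ∘ τ') :=
      Relation.ReflTransGen.mono (r := MStep E F') (p := MStep E F) (fun a b hs =>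
        ⟨⟨fun e he => hF' (hs.1.1 e he), hs.1.2⟩,
          ⟨fun e he => hF' (hs.2.1.1 e he), hs.2.1.2⟩, hs.2.2⟩) _ _ h
    have h3 : MWalk E F (r ∘ τ') τ' :=
      haveI : Std.Symm (MStep E F) := ⟨fun _ _ hs => step_symm hs⟩
      Relation.ReflTransGen.stdSymm.symm _ _ (walk_retract hr hdis hτ')
    exact ((walk_retract hr hdis hτ).trans h2).trans h3
end

section
/- Let G be a finite connected simple graph with a designated vertex v₀, let F be a finite set of distinct nonzero vectors in (Fin m → ZMod 2), let D(F) be the decision graph of F, and let b ∈ (Fin m → ZMod 2). Then the assignment φ ↦ τ_φ, where τ_φ(𝟙_u + 𝟙_v) = φ(u) + φ(v), is a bijection from the set of graph homomorphisms φ : G → D(F) with φ(v₀) = b onto the set of all matroid homomorphisms from the graphic matroid M(G) to the binary matroid with point set F. -/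
theorem aux_cycle {P Q : Type*} [AddCommGroup P] [AddCommGroup Q] [DecidableEq P]
    (E : Finset P) (τ : P → Q)
    (h : ∀ Z, IsCircuit E Z → ∑ e ∈ Z, τ e = 0) (Z : Finset P) :
    Z ⊆ E → ∑ e ∈ Z, e = 0 → ∑ e ∈ Z, τ e = 0 := by
  induction Z using Finset.strongInduction with
  | H Z ih =>
    intro hZ h0
    rcases Z.eq_empty_or_nonempty with rfl | hne
    · simp
    by_cases hc : IsCircuit E Z
    · exact h Z hc
    · have : ∃ Z' ⊆ Z, Z'.Nonempty ∧ ∑ e ∈ Z', e = 0 ∧ Z' ≠ Z := by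
        by_contra hcon
        push Not at hcon
        exact hc ⟨hZ, hne, h0, hcon⟩
      obtain ⟨Z', hs, hn, hz, hneq⟩ := this
      have h1 := ih Z' (Finset.ssubset_iff_subset_ne.2 ⟨hs, hneq⟩) (hs.trans hZ) hz
      have e1 := Finset.sum_sdiff (f := fun e : P => e) hs
      have h2 := ih (Z \ Z') (Finset.sdiff_ssubset hs hn) (Finset.sdiff_subset.trans hZ)
        (by rw [hz, h0, add_zero] at e1; exact e1)
      rw [← Finset.sum_sdiff hs, h1, h2, add_zero]

theorem aux_factor {K A B C : Type*} [Field K] [AddCommGroup A] [AddCommGroup B] [AddCommGroup C]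
    [Module K A] [Module K B] [Module K C] (f : A →ₗ[K] B) (h : A →ₗ[K] C)
    (hk : ∀ a, f a = 0 → h a = 0) : ∃ L : B →ₗ[K] C, ∀ a, L (f a) = h a := by
  obtain ⟨s, hs⟩ := f.rangeRestrict.exists_rightInverse_of_surjective
    (LinearMap.range_rangeRestrict f)
  obtain ⟨L, hL⟩ := LinearMap.exists_extend (h ∘ₗ s)
  refine ⟨L, fun a => ?_⟩
  have h1 : L (f a) = h (s (f.rangeRestrict a)) := LinearMap.congr_fun hL (f.rangeRestrict a)
  have h2 : f.rangeRestrict (s (f.rangeRestrict a)) = f.rangeRestrict a :=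
    LinearMap.congr_fun hs (f.rangeRestrict a)
  have h3 : f (s (f.rangeRestrict a)) = f a := congrArg Subtype.val h2
  rw [h1, ← sub_eq_zero, ← map_sub]
  apply hk
  rw [map_sub, h3, sub_self]

theorem aux_sum {P Q : Type*} [AddCommGroup Q] [Module (ZMod 2) Q] [DecidableEq P]
    (E : Finset P) (c : P → ZMod 2) (t : P → Q) :
    ∑ e ∈ E, c e • t e = ∑ e ∈ E.filter (fun e => c e = 1), t e := by
  rw [Finset.sum_filter]
  refine Finset.sum_congr rfl fun e _ => ?_
  have : ∀ x : ZMod 2, x = 0 ∨ x = 1 := by decide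
  rcases this (c e) with h | h <;> simp [h]

theorem aux_ext {P Q : Type*} [AddCommGroup P] [AddCommGroup Q] [DecidableEq P]
    [Module (ZMod 2) P] [Module (ZMod 2) Q] (E : Finset P) (τ : P → Q)
    (h : ∀ Z, IsCircuit E Z → ∑ e ∈ Z, τ e = 0) :
    ∃ L : P →ₗ[ZMod 2] Q, ∀ e ∈ E, L e = τ e := by
  let f : (P → ZMod 2) →ₗ[ZMod 2] P :=
    { toFun := fun c => ∑ e ∈ E, c e • e
      map_add' := by intro x y; simp [add_smul, Finset.sum_add_distrib]
      map_smul' := by intro r x; simp [mul_smul, Finset.smul_sum] }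
  let g : (P → ZMod 2) →ₗ[ZMod 2] Q :=
    { toFun := fun c => ∑ e ∈ E, c e • τ e
      map_add' := by intro x y; simp [add_smul, Finset.sum_add_distrib]
      map_smul' := by intro r x; simp [mul_smul, Finset.smul_sum] }
  obtain ⟨L, hL⟩ := aux_factor f g (by
    intro c hc
    change ∑ e ∈ E, c e • e = 0 at hc
    change ∑ e ∈ E, c e • τ e = 0
    rw [aux_sum E c (fun e => e)] at hc
    rw [aux_sum]
    exact aux_cycle E τ h _ (Finset.filter_subset _ _) hc)
  refine ⟨L, fun e he => ?_⟩
  have h1 : f (Pi.single e 1) = e := by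
    change ∑ e' ∈ E, (Pi.single e 1 : P → ZMod 2) e' • e' = e
    simp [Pi.single_apply, ite_smul, he]
  have h2 : g (Pi.single e 1) = τ e := by
    change ∑ e' ∈ E, (Pi.single e 1 : P → ZMod 2) e' • τ e' = τ e
    simp [Pi.single_apply, ite_smul, he]
  rw [← h2, ← hL, h1]

theorem stmt12 {V : Type*} [Fintype V] [DecidableEq V] (m : ℕ)
    (G : SimpleGraph V) (hG : G.Connected) (v₀ : V)
    (F : Finset (Fin m → ZMod 2)) (hF : ∀ f ∈ F, f ≠ 0)
    (b : Fin m → ZMod 2)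
    (EG : Finset (V → ZMod 2))
    (hEG : ∀ x, x ∈ EG ↔ ∃ u v, G.Adj u v ∧ x = ind u + ind v) :
    (∀ φ : G →g decisionGraph F, φ v₀ = b →
      ∃ τ : (V → ZMod 2) → (Fin m → ZMod 2),
        (∀ u v, G.Adj u v → τ (ind u + ind v) = φ u + φ v) ∧ IsMHom EG F τ) ∧
    (∀ τ : (V → ZMod 2) → (Fin m → ZMod 2), IsMHom EG F τ →
      ∃! φ : {φ : G →g decisionGraph F // φ v₀ = b},
        ∀ u v, G.Adj u v → τ (ind u + ind v) = φ.1 u + φ.1 v) := by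
  have two : ∀ {k : ℕ} (x : Fin k → ZMod 2), x + x = 0 := fun x => by
    funext i; exact CharTwo.add_self_eq_zero _
  constructor
  · intro φ _
    let L : (V → ZMod 2) →ₗ[ZMod 2] (Fin m → ZMod 2) :=
      { toFun := fun c => ∑ e, c e • φ e
        map_add' := by intro x y; simp only [Pi.add_apply, add_smul, Finset.sum_add_distrib]
        map_smul' := by
          intro r x
          simp only [Pi.smul_apply, smul_eq_mul, mul_smul, Finset.smul_sum, RingHom.id_apply] }
    have hL : ∀ u, L (ind u) = φ u := by
      intro u
      change ∑ e, (ind u : V → ZMod 2) e • φ e = φ u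
      simp [ind, Pi.single_apply, ite_smul]
    have hE : ∀ u v, G.Adj u v → L (ind u + ind v) = φ u + φ v := by
      intro u v _
      rw [map_add, hL, hL]
    refine ⟨L, hE, ?_, ?_⟩
    · intro e he
      obtain ⟨u, v, huv, rfl⟩ := (hEG e).1 he
      rw [hE u v huv]
      exact (φ.map_adj huv).1
    · intro Z hZ
      rw [← map_sum, hZ.2.2.1, map_zero]
  · intro τ hτ
    obtain ⟨L, hL⟩ := aux_ext EG τ hτ.2
    have hE : ∀ u v, G.Adj u v → L (ind u) + L (ind v) = τ (ind u + ind v) := by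
      intro u v huv
      rw [← map_add]
      exact hL _ ((hEG _).2 ⟨u, v, huv, rfl⟩)
    have hE2 : ∀ u v, G.Adj u v → (L (ind u) + L (ind v₀) + b) + (L (ind v) + L (ind v₀) + b)
        = τ (ind u + ind v) := by
      intro u v huv
      rw [← hE u v huv]
      have : (L (ind u) + L (ind v₀) + b) + (L (ind v) + L (ind v₀) + b)
        = L (ind u) + L (ind v) + (L (ind v₀) + L (ind v₀)) + (b + b) := by abel
      rw [this, two, two, add_zero, add_zero]
    refine ⟨⟨⟨fun u => L (ind u) + L (ind v₀) + b, ?_⟩, ?_⟩, ?_, ?_⟩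
    · intro u v huv
      have hm : τ (ind u + ind v) ∈ F := hτ.1 _ ((hEG _).2 ⟨u, v, huv, rfl⟩)
      rw [← hE2 u v huv] at hm
      refine ⟨hm, fun heq => hF _ hm ?_⟩
      rw [heq]
      exact two _
    · change L (ind v₀) + L (ind v₀) + b = b
      rw [two, zero_add]
    · intro u v huv
      exact (hE2 u v huv).symm
    · rintro ⟨ψ, hψ⟩ h
      have key : ∀ u, ψ u = L (ind u) + L (ind v₀) + b := by
        intro u
        obtain ⟨w⟩ := hG.preconnected u v₀
        have gen : ∀ x y, G.Walk x y → ψ y = L (ind y) + L (ind v₀) + b →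
            ψ x = L (ind x) + L (ind v₀) + b := by
          intro x y w
          induction w with
          | nil => exact id
          | cons hadj _ ih =>
            intro hy
            have h1 := ih hy
            have h2 := h _ _ hadj
            rw [← hE2 _ _ hadj] at h2
            change _ = ψ _ + ψ _ at h2
            rw [h1] at h2
            exact (add_right_cancel h2).symm
        exact gen u v₀ w (by rw [two, zero_add, hψ])
      apply Subtype.ext
      apply RelHom.ext
      exact key
end

section
/- Let n ≥ 5 and let G be a finite simple graph. Let the graphic matroid M(K_n) have point set {𝟙_i + 𝟙_j : i ≠ j in Fin n} ⊆ (Fin n → ZMod 2) and let M(G) have point set E_G = {𝟙_u + 𝟙_v : uv ∈ E(G)} ⊆ (V(G) → ZMod 2). Then for every matroid homomorphism τ from M(K_n) to M(G) there exists an injective map f : Fin n → V(G) such that f(i) and f(j) are adjacent in G for all i ≠ j and τ(𝟙_i + 𝟙_j) = 𝟙_{f(i)} + 𝟙_{f(j)} for all i ≠ j; that is, τ maps M(K_n) isomorphically onto a copy of M(K_n) in M(G). -/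
lemma ind_app {V : Type*} [DecidableEq V] (u w : V) : ind u w = if w = u then 1 else 0 := by
  simp [ind, Pi.single_apply]

lemma z2_one_ne : (1 : ZMod 2) ≠ 0 := by decide

lemma z2_add : (1 : ZMod 2) + 1 = 0 := by decide

lemma pi_add_self {V : Type*} (x : V → ZMod 2) : x + x = 0 := by
  funext i
  exact CharTwo.add_self_eq_zero (x i)

lemma pi_add_zero {V : Type*} {x y : V → ZMod 2} (h : x + y = 0) : x = y := by
  have := congrArg (· + y) h
  simpa [add_assoc, pi_add_self] using this

lemma four_mem {V : Type*} [DecidableEq V] {a b c d u v : V}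
    (h : ind a + ind b + (ind c + ind d) = ind u + ind v)
    (h1 : a ≠ b) (h2 : a ≠ c) (h3 : a ≠ d) : a = u ∨ a = v := by
  have := congrFun h a
  simp only [Pi.add_apply, ind_app, h1, h2, h3, if_true, if_false] at this
  by_contra! hc
  simp [hc.1, hc.2] at this

lemma four_share {V : Type*} [DecidableEq V] {a b c d u v : V}
    (h : ind a + ind b + (ind c + ind d) = ind u + ind v)
    (hab : a ≠ b) (hcd0 : c ≠ d) : a = c ∨ a = d ∨ b = c ∨ b = d := by
  by_contra! hc
  obtain ⟨h1, h2, h3, h4⟩ := hc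
  have e1 := four_mem h hab h1 h2
  have e2 := four_mem (a := b) (b := a) (by rw [← h]; abel) hab.symm h3 h4
  have huv : ind u + ind v = ind a + ind b := by
    rcases e1 with rfl | rfl <;> rcases e2 with rfl | rfl
    · exact absurd rfl hab
    · rfl
    · exact add_comm _ _
    · exact absurd rfl hab
  rw [huv] at h
  have h0 : ind c + ind d = (0 : V → ZMod 2) := add_eq_left.1 h
  have hcd := congrFun h0 c
  simp [ind_app, hcd0] at hcd

lemma two_eq {V : Type*} [DecidableEq V] {a b u v : V}
    (h : ind a + ind b = ind u + ind v) (hab : a ≠ b) :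
    (a = u ∧ b = v) ∨ (a = v ∧ b = u) := by
  have e1 := congrFun h a
  have e2 := congrFun h b
  simp only [Pi.add_apply, ind_app] at e1 e2
  have := z2_one_ne
  grind

lemma tri_circuit {n : ℕ} (Kn : Finset (Fin n → ZMod 2)) {x y z : Fin n → ZMod 2}
    (hx : x ∈ Kn) (hy : y ∈ Kn) (hz : z ∈ Kn) (x0 : x ≠ 0) (y0 : y ≠ 0) (z0 : z ≠ 0)
    (h : x + y + z = 0) :
    IsCircuit Kn {x, y, z} ∧ x ≠ y ∧ x ≠ z ∧ y ≠ z := by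
  have hxy : x ≠ y := by
    rintro rfl; apply z0; simpa [pi_add_self] using h
  have hxz : x ≠ z := by
    rintro rfl; apply y0; simpa [add_right_comm, pi_add_self] using h
  have hyz : y ≠ z := by
    rintro rfl; apply x0; simpa [add_assoc, pi_add_self] using h
  have hsum : ∑ e ∈ ({x, y, z} : Finset (Fin n → ZMod 2)), e = 0 := by
    rw [Finset.sum_insert (by simp [hxy, hxz]), Finset.sum_pair hyz, ← add_assoc, h]
  refine ⟨⟨?_, ⟨x, by simp⟩, hsum, ?_⟩, hxy, hxz, hyz⟩
  · intro w hw
    simp at hw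
    rcases hw with rfl | rfl | rfl <;> assumption
  · intro Z' hZ' hne hs
    -- complement also sums to zero; one of the two has at most one element
    have key : ∀ W : Finset (Fin n → ZMod 2), W ⊆ {x, y, z} → ∑ e ∈ W, e = 0 → W.card ≠ 1 := by
      intro W hW hs hc
      obtain ⟨w, rfl⟩ := Finset.card_eq_one.1 hc
      have : w ∈ ({x, y, z} : Finset (Fin n → ZMod 2)) := hW (by simp)
      simp at this hs
      rcases this with rfl | rfl | rfl <;> contradiction
    have h1 := key Z' hZ' hs
    have h2 := key ({x, y, z} \ Z') Finset.sdiff_subset (by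
      have := Finset.sum_sdiff (f := fun e => e) hZ'
      rw [hs, hsum] at this
      simpa using this)
    rw [Finset.card_sdiff_of_subset hZ'] at h2
    have h3 : ({x, y, z} : Finset (Fin n → ZMod 2)).card = 3 := by
      rw [Finset.card_eq_three]; exact ⟨x, y, z, hxy, hxz, hyz, rfl⟩
    have h4 := Finset.card_le_card hZ'
    have h5 := hne.card_pos
    exact Finset.eq_of_subset_of_card_le hZ' (by omega)

lemma ind_add_ne {V : Type*} [DecidableEq V] {a b : V} (h : a ≠ b) : ind a + ind b ≠ 0 := by
  intro e
  have := congrFun e a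
  simp [ind_app, h] at this

theorem stmt17 {V : Type*} [Fintype V] [DecidableEq V] (n : ℕ) (hn : 5 ≤ n)
    (G : SimpleGraph V)
    (Kn : Finset (Fin n → ZMod 2))
    (hKn : ∀ x, x ∈ Kn ↔ ∃ i j : Fin n, i ≠ j ∧ x = ind i + ind j)
    (EG : Finset (V → ZMod 2))
    (hEG : ∀ x, x ∈ EG ↔ ∃ u v, G.Adj u v ∧ x = ind u + ind v)
    (τ : (Fin n → ZMod 2) → (V → ZMod 2)) (hτ : IsMHom Kn EG τ) :
    ∃ f : Fin n → V, Function.Injective f ∧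
      (∀ i j, i ≠ j → G.Adj (f i) (f j)) ∧
      (∀ i j : Fin n, i ≠ j → τ (ind i + ind j) = ind (f i) + ind (f j)) := by
  obtain ⟨hm, hc⟩ := hτ
  have hK : ∀ i j : Fin n, i ≠ j → ind i + ind j ∈ Kn := fun i j h => (hKn _).2 ⟨i, j, h, rfl⟩
  have tri : ∀ i j k : Fin n, i ≠ j → i ≠ k → j ≠ k →
      τ (ind i + ind j) + τ (ind i + ind k) = τ (ind j + ind k) := by
    intro i j k hij hik hjk
    obtain ⟨h1, h2, h3, h4⟩ := tri_circuit Kn (hK i j hij) (hK i k hik) (hK j k hjk)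
      (ind_add_ne hij) (ind_add_ne hik) (ind_add_ne hjk) (by
        have : (ind i + ind j + (ind i + ind k) + (ind j + ind k) : Fin n → ZMod 2)
          = (ind i + ind i) + (ind j + ind j) + (ind k + ind k) := by abel
        rw [this]; simp [pi_add_self])
    have := hc _ h1
    rw [Finset.sum_insert (by simp [h2, h3]), Finset.sum_pair h4, ← add_assoc] at this
    exact pi_add_zero this
  have hE : ∀ i j : Fin n, i ≠ j → ∃ u v, G.Adj u v ∧ τ (ind i + ind j) = ind u + ind v :=
    fun i j h => (hEG _).1 (hm _ (hK i j h))
  let o : Fin n := ⟨0, by omega⟩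
  let p1 : Fin n := ⟨1, by omega⟩
  let p2 : Fin n := ⟨2, by omega⟩
  have h01 : p1 ≠ o := by simp [o, p1]
  have h02 : p2 ≠ o := by simp [o, p2]
  have h12 : p1 ≠ p2 := by simp [p1, p2]
  have hV : Nonempty V := by
    obtain ⟨u, _⟩ := hE p1 o h01
    exact ⟨u⟩
  have hab : ∀ j : Fin n, ∃ u v, j ≠ o → G.Adj u v ∧ τ (ind o + ind j) = ind u + ind v := by
    intro j
    by_cases h : j = o
    · exact ⟨Classical.arbitrary V, Classical.arbitrary V, fun h' => absurd h h'⟩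
    · obtain ⟨u, v, h'⟩ := hE o j (Ne.symm h)
      exact ⟨u, v, fun _ => h'⟩
  choose a b hab using hab
  have hne : ∀ j, j ≠ o → a j ≠ b j := fun j h => (hab j h).1.ne
  -- distinct and sharing
  have hdist : ∀ i j, i ≠ o → j ≠ o → i ≠ j →
      ¬ (a i = a j ∧ b i = b j) ∧ ¬ (a i = b j ∧ b i = a j) := by
    intro i j hi hj hij
    have ht := tri o i j hi.symm hj.symm hij
    rw [(hab i hi).2, (hab j hj).2] at ht
    obtain ⟨u, v, huv, he⟩ := hE i j hij
    rw [he] at ht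
    constructor
    · rintro ⟨e1, e2⟩
      rw [e1, e2, pi_add_self] at ht
      exact ind_add_ne huv.ne ht.symm
    · rintro ⟨e1, e2⟩
      rw [e1, e2, add_comm (ind (b j)), pi_add_self] at ht
      exact ind_add_ne huv.ne ht.symm
  have hshare : ∀ i j, i ≠ o → j ≠ o → i ≠ j →
      a i = a j ∨ a i = b j ∨ b i = a j ∨ b i = b j := by
    intro i j hi hj hij
    have ht := tri o i j hi.symm hj.symm hij
    rw [(hab i hi).2, (hab j hj).2] at ht
    obtain ⟨u, v, huv, he⟩ := hE i j hij
    rw [he] at ht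
    exact four_share ht (hne i hi) (hne j hj)
  have hstar : ∃ c, ∀ j, j ≠ o → a j = c ∨ b j = c := by
    have hcc : ∃ c, (a p1 = c ∨ b p1 = c) ∧ (a p2 = c ∨ b p2 = c) := by
      rcases hshare p1 p2 h01 h02 h12 with h | h | h | h
      · exact ⟨_, Or.inl h, Or.inl rfl⟩
      · exact ⟨_, Or.inl h, Or.inr rfl⟩
      · exact ⟨_, Or.inr h, Or.inl rfl⟩
      · exact ⟨_, Or.inr h, Or.inr rfl⟩
    obtain ⟨c, hc1, hc2⟩ := hcc
    refine ⟨c, fun j hj => ?_⟩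
    by_contra! hcj
    have j1 : j ≠ p1 := by rintro rfl; tauto
    have j2 : j ≠ p2 := by rintro rfl; tauto
    obtain ⟨k, hk⟩ : ∃ k : Fin n, k ∉ ({o, p1, p2, j} : Finset (Fin n)) := by
      by_contra! hall
      have h1 : (Finset.univ : Finset (Fin n)) ⊆ {o, p1, p2, j} := fun k _ => hall k
      have h2 := Finset.card_le_card h1
      have h3 := Finset.card_le_four (a := o) (b := p1) (c := p2) (d := j)
      simp at h2
      omega
    simp only [Finset.mem_insert, Finset.mem_singleton, not_or] at hk
    obtain ⟨k0, k1, k2, k3⟩ := hk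
    have s1 := hshare j p1 hj h01 j1
    have s2 := hshare j p2 hj h02 j2
    have s3 := hshare k p1 k0 h01 k1
    have s4 := hshare k p2 k0 h02 k2
    have s5 := hshare k j k0 hj k3
    have d0 := hdist p1 p2 h01 h02 h12
    have d3 := hdist k p1 k0 h01 k1
    have d4 := hdist k p2 k0 h02 k2
    have d5 := hdist k j k0 hj k3
    have n1 := hne p1 h01
    have n2 := hne p2 h02
    have n3 := hne j hj
    have n4 := hne k k0
    clear_value o p1 p2
    generalize a p1 = a1 at *
    generalize b p1 = b1 at *
    generalize a p2 = a2 at *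
    generalize b p2 = b2 at *
    generalize a j = aj at *
    generalize b j = bj at *
    generalize a k = ak at *
    generalize b k = bk at *
    clear hshare hdist hne hab tri hE hK hm hc hKn hEG
    grind
  obtain ⟨c, hcs⟩ := hstar
  let f : Fin n → V := fun j => if j = o then c else if a j = c then b j else a j
  have hf0 : ∀ j, j ≠ o → τ (ind o + ind j) = ind (f o) + ind (f j) := by
    intro j hj
    rw [(hab j hj).2]
    by_cases h : a j = c
    · simp [f, hj, h]
    · have := (hcs j hj).resolve_left h
      simp [f, hj, h, this, add_comm]
  have hf : ∀ i j : Fin n, i ≠ j → τ (ind i + ind j) = ind (f i) + ind (f j) := by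
    intro i j hij
    by_cases hi : i = o
    · subst hi
      exact hf0 j hij.symm
    by_cases hj : j = o
    · subst hj
      rw [add_comm, hf0 i hi, add_comm]
    rw [← tri o i j (Ne.symm hi) (Ne.symm hj) hij, hf0 i hi, hf0 j hj]
    have : ind (f o) + ind (f i) + (ind (f o) + ind (f j))
      = (ind (f o) + ind (f o)) + (ind (f i) + ind (f j)) := by abel
    rw [this, pi_add_self, zero_add]
  have hadj : ∀ i j, i ≠ j → G.Adj (f i) (f j) := by
    intro i j hij
    obtain ⟨u, v, huv, he⟩ := hE i j hij
    rw [hf i j hij] at he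
    rcases two_eq he.symm huv.ne with ⟨h1, h2⟩ | ⟨h1, h2⟩
    · rw [← h1, ← h2]; exact huv
    · rw [← h1, ← h2]; exact huv.symm
  refine ⟨f, ?_, hadj, hf⟩
  intro i j h
  by_contra hij
  exact (hadj i j hij).ne h
end

section
/- Let n ≥ 1 and let F be the set of all vectors of weight 0 or 2 in (Fin n → ZMod 2) (the point set of the looped clique matroid M^ℓ(K_n)). Then for every simple binary matroid E ⊆ (Fin m → ZMod 2), any two matroid homomorphisms τ, τ' : E → F are joined by a walk in the recolouring graph mCol(E, F); that is, the matroid recolouring problem for M^ℓ(K_n) is trivial. -/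
theorem aux_z2 (a : ZMod 2) : a ≠ 0 → a = 1 := by revert a; decide

theorem aux_add_self {n : ℕ} (x : Fin n → ZMod 2) : x + x = 0 := by
  ext i; simp only [Pi.add_apply, Pi.zero_apply]; exact CharTwo.add_self_eq_zero _

theorem aux_wt_pair {n : ℕ} (a b : Fin n) :
    wt (ind a + ind b) = 0 ∨ wt (ind a + ind b) = 2 := by
  by_cases h : a = b
  · left; subst h; rw [aux_add_self]; simp [wt]
  · right
    have : (Finset.univ.filter fun i => (ind a + ind b) i ≠ 0) = {a, b} := by
      ext k
      simp only [Finset.mem_filter, Finset.mem_univ, true_and, Finset.mem_insert,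
        Finset.mem_singleton, ind, Pi.add_apply, Pi.single_apply]
      by_cases h1 : k = a <;> by_cases h2 : k = b <;> simp_all
    rw [wt, this, Finset.card_pair h]

theorem aux_pair_of_wt {n : ℕ} (x : Fin n → ZMod 2) (i : Fin n) (hi : x i ≠ 0)
    (h : wt x = 0 ∨ wt x = 2) : ∃ b, x = ind i + ind b := by
  have hmem : i ∈ (Finset.univ.filter fun i => x i ≠ 0) := by simp [hi]
  rcases h with h | h
  · rw [wt, Finset.card_eq_zero] at h
    rw [h] at hmem; simp at hmem
  · rw [wt, Finset.card_eq_two] at h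
    have key : ∀ b, i ≠ b → (Finset.univ.filter fun i => x i ≠ 0) = {i, b} →
        x = ind i + ind b := by
      intro b hb hs
      ext k
      have hk : k ∈ (Finset.univ.filter fun i => x i ≠ 0) ↔ k ∈ ({i, b} : Finset _) := by rw [hs]
      simp only [Finset.mem_filter, Finset.mem_univ, true_and, Finset.mem_insert,
        Finset.mem_singleton] at hk
      simp only [ind, Pi.add_apply, Pi.single_apply]
      by_cases hx : x k = 0
      · have : ¬ (k = i ∨ k = b) := fun h => hk.2 h hx
        push Not at this
        simp [hx, this.1, this.2]
      · rw [aux_z2 _ hx]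
        rcases hk.1 hx with rfl | rfl
        · simp [hb]
        · simp [Ne.symm hb]
    obtain ⟨a, b, hab, hs⟩ := h
    rw [hs] at hmem
    simp only [Finset.mem_insert, Finset.mem_singleton] at hmem
    rcases hmem with rfl | rfl
    · exact ⟨b, key b hab hs⟩
    · exact ⟨a, key a hab.symm (by rw [hs, Finset.pair_comm])⟩

theorem aux_step_symm {n m : ℕ} {E : Finset (Fin m → ZMod 2)} {F : Finset (Fin n → ZMod 2)}
    {τ τ' : (Fin m → ZMod 2) → (Fin n → ZMod 2)} (h : MStep E F τ τ') : MStep E F τ' τ := by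
  obtain ⟨h1, h2, h3⟩ := h
  refine ⟨h2, h1, ?_⟩
  rcases h3 with h3 | ⟨C, hC, h3⟩
  · exact Or.inl fun e he => (h3 e he).symm
  · exact Or.inr ⟨C, hC, fun e he => by rw [ne_comm]; exact h3 e he⟩

theorem aux_cocircuit {P : Type*} [AddCommGroup P] [DecidableEq P] (E D : Finset P)
    (hDE : D ⊆ E) (hne : D.Nonempty) (hD : ∀ Z, IsCircuit E Z → Even (D ∩ Z).card) :
    ∃ C ⊆ D, IsCocircuit E C := by
  induction hk : D.card using Nat.strong_induction_on generalizing D with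
  | _ k ih =>
    by_cases h : ∀ C' ⊆ D, C'.Nonempty → (∀ Z, IsCircuit E Z → Even (C' ∩ Z).card) → C' = D
    · exact ⟨D, subset_rfl, hDE, hne, hD, h⟩
    · push Not at h
      obtain ⟨C', h1, h2, h3, h4⟩ := h
      have hlt : C'.card < D.card := Finset.card_lt_card (h1.ssubset_of_ne h4)
      obtain ⟨C, hC, hC'⟩ := ih _ (hk ▸ hlt) C' (h1.trans hDE) h2 h3 rfl
      exact ⟨C, hC.trans h1, hC'⟩

theorem aux_to_zero (n : ℕ) (j : Fin n)
    (F : Finset (Fin n → ZMod 2)) (hF : ∀ x, x ∈ F ↔ (wt x = 0 ∨ wt x = 2))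
    (m : ℕ) (E : Finset (Fin m → ZMod 2)) (k : ℕ) :
    ∀ (τ : (Fin m → ZMod 2) → (Fin n → ZMod 2)), IsMHom E F τ →
    ∑ e ∈ E, (Finset.univ.filter fun i => i ≠ j ∧ τ e i ≠ 0).card = k →
    MWalk E F τ (fun _ => 0) := by
  induction k using Nat.strong_induction_on with
  | _ k ih =>
  intro τ hτ hk
  by_cases h : ∀ e ∈ E, ∀ i, i ≠ j → τ e i = 0
  · refine Relation.ReflTransGen.single ⟨hτ, ⟨fun e _ => (hF _).2 (by left; simp [wt]), by simp⟩,
      Or.inl fun e he => ?_⟩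
    by_contra hne
    obtain ⟨i, hi⟩ := Function.ne_iff.1 hne
    obtain ⟨b, hb⟩ := aux_pair_of_wt (τ e) i hi ((hF _).1 (hτ.1 e he))
    have hij : i = j := by by_contra hij; exact hi (h e he i hij)
    by_cases hbi : b = i
    · apply hne; rw [hb, hbi, aux_add_self]
    · have := h e he b (by rw [← hij]; exact hbi)
      rw [hb] at this
      simp [ind, hbi] at this
  · push Not at h
    obtain ⟨e₀, he₀, i, hij, hi⟩ := h
    obtain ⟨C, hCD, hC⟩ := aux_cocircuit E (E.filter fun e => τ e i ≠ 0)
      (Finset.filter_subset _ _) ⟨e₀, by simp [he₀, hi]⟩ (by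
        intro Z hZ
        have h0 : ∑ e ∈ Z, τ e i = 0 := by
          have := congrFun (hτ.2 Z hZ) i
          simpa using this
        have h1 : (E.filter fun e => τ e i ≠ 0) ∩ Z = Z.filter fun e => τ e i ≠ 0 := by
          ext e
          simp only [Finset.mem_inter, Finset.mem_filter]
          exact ⟨fun h => ⟨h.2, h.1.2⟩, fun h => ⟨⟨hZ.1 h.1, h.2⟩, h.1⟩⟩
        rw [← Finset.sum_filter_ne_zero] at h0
        rw [h1, ← ZMod.natCast_eq_zero_iff_even]
        refine Eq.trans ?_ h0
        rw [Finset.card_eq_sum_ones, Nat.cast_sum]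
        refine Finset.sum_congr rfl fun e he => ?_
        rw [aux_z2 _ (Finset.mem_filter.1 he).2]; simp)
    have hCE : ∀ e ∈ C, e ∈ E ∧ τ e i ≠ 0 := fun e he => Finset.mem_filter.1 (hCD he)
    have hv : ind i + ind j ≠ (0 : Fin n → ZMod 2) := by
      intro h
      have := congrFun h i
      simp [ind, hij] at this
    let σ : (Fin m → ZMod 2) → (Fin n → ZMod 2) :=
      fun e => τ e + if e ∈ C then ind i + ind j else 0
    have hσ : IsMHom E F σ := by
      constructor
      · intro e he
        by_cases heC : e ∈ C
        · obtain ⟨b, hb⟩ := aux_pair_of_wt (τ e) i (hCE e heC).2 ((hF _).1 (hτ.1 e he))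
          have : σ e = ind b + ind j := by
            simp only [σ, heC, if_true, hb]
            rw [show ind i + ind b + (ind i + ind j) = (ind i + ind i) + (ind b + ind j) by abel,
              aux_add_self, zero_add]
          rw [this, hF]
          exact aux_wt_pair b j
        · simpa [σ, heC] using hτ.1 e he
      · intro Z hZ
        simp only [σ, Finset.sum_add_distrib, hτ.2 Z hZ, zero_add]
        rw [← Finset.sum_filter, Finset.sum_const]
        have h1 : (Z.filter fun e => e ∈ C) = C ∩ Z := by
          ext e; simp [and_comm]
        rw [h1]
        obtain ⟨r, hr⟩ := hC.2.2.1 Z hZ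
        rw [hr, add_smul, aux_add_self]
    have hstep : MStep E F τ σ := by
      refine ⟨hτ, hσ, Or.inr ⟨C, hC, fun e _ => ?_⟩⟩
      by_cases heC : e ∈ C <;> simp [σ, heC, hv]
    refine Relation.ReflTransGen.head hstep (ih _ ?_ σ hσ rfl)
    rw [← hk]
    have hss : ∀ e ∈ E, (Finset.univ.filter fun l => l ≠ j ∧ σ e l ≠ 0) ⊆
        (Finset.univ.filter fun l => l ≠ j ∧ τ e l ≠ 0) := by
      intro e he l hl
      simp only [Finset.mem_filter, Finset.mem_univ, true_and] at hl ⊢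
      refine ⟨hl.1, ?_⟩
      by_cases heC : e ∈ C
      · by_cases hli : l = i
        · subst hli; exact (hCE e heC).2
        · have := hl.2
          simpa [σ, heC, ind, hli, hl.1] using this
      · simpa [σ, heC] using hl.2
    obtain ⟨c, hc⟩ := hC.2.1
    refine Finset.sum_lt_sum (fun e he => Finset.card_le_card (hss e he))
      ⟨c, (hCE c hc).1, Finset.card_lt_card ?_⟩
    refine (Finset.ssubset_iff_of_subset (hss c (hCE c hc).1)).2 ⟨i, ?_, ?_⟩
    · simp [hij, (hCE c hc).2]
    · have : σ c i = 0 := by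
        simp only [σ, hc, if_true, Pi.add_apply, aux_z2 _ (hCE c hc).2]
        simp [ind, hij]
        decide
      simp [this]

theorem stmt19 (n : ℕ) (hn : 1 ≤ n)
    (F : Finset (Fin n → ZMod 2)) (hF : ∀ x, x ∈ F ↔ (wt x = 0 ∨ wt x = 2))
    (m : ℕ) (E : Finset (Fin m → ZMod 2)) (hE : ∀ e ∈ E, e ≠ 0)
    (τ τ' : (Fin m → ZMod 2) → (Fin n → ZMod 2))
    (hτ : IsMHom E F τ) (hτ' : IsMHom E F τ') :
    MWalk E F τ τ' := by
  have h1 := aux_to_zero n ⟨0, hn⟩ F hF m E _ τ hτ rfl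
  have h2 := aux_to_zero n ⟨0, hn⟩ F hF m E _ τ' hτ' rfl
  have : Std.Symm (MStep E F) := ⟨fun _ _ h => aux_step_symm h⟩
  exact Relation.ReflTransGen.trans h1 (Relation.ReflTransGen.stdSymm.symm _ _ h2)
end
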